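/- Let n ≥ 2 and γ ∈ (0,2). There exists a constant C > 0, depending only on n and γ, such that for every Schwartz function f : ℝⁿ → ℝ and all x, h ∈ ℝⁿ, C · (sup_{z ∈ ℝⁿ} |f(z)|)^γ · |h|^γ · ∫_{ℝⁿ} |δ_h f(x) − δ_h f(x+y)|² / |y|^{n+γ} dy ≥ |δ_h f(x)|^{γ+2}. -/

import Mathlib

open MeasureTheory

/-!
The increments of `f` along an arithmetic progression telescope:
`∑_{k < N} δ_h f(z + kh) = f(z + Nh) - f(z)` stays bounded by `2‖f‖_∞`. Hence, as soon as
`N|a| ≥ 4‖f‖_∞`, the values `δ_h f(z + kh)`, `k < N`, differ from `a` by at least `|a|/2` in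
quadratic mean. Take `a = δ_h f(x)` and average over `z` in the ball of radius `R = N|h|` about `x`:
translation invariance bounds `∫_{|y| ≤ 2R} |a - δ_h f(x + y)|² dy` from below by a multiple of
`Rⁿ|a|²`. On this ball the kernel is at least `(2R)^{-n-γ}`, so `D_γ(δ_h f)(x) ≳ |a|² R^{-γ}`, and
`N ∼ ‖f‖_∞ / |a|` gives the claim.
-/

open Finset Metric Module fwdDiff
open scoped NNReal

section Telescoping

variable {E F : Type*}

lemma sum_range_fwdDiff_add_nsmul [AddCommMonoid E] [AddCommGroup F] (f : E → F) (h z : E)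
    (N : ℕ) : ∑ k ∈ range N, Δ_[h] f (z + k • h) = f (z + N • h) - f z := by
  simpa only [fwdDiff, add_assoc, ← succ_nsmul, zero_nsmul, add_zero] using
    sum_range_sub (fun k ↦ f (z + k • h)) N

variable [SeminormedAddCommGroup F]

lemma norm_fwdDiff_le [AddCommMonoid E] {f : E → F} {M : ℝ} (hf : ∀ z, ‖f z‖ ≤ M) (h x : E) :
    ‖Δ_[h] f x‖ ≤ 2 * M := by
  rw [two_mul]
  exact norm_sub_le_of_le (hf _) (hf _)

lemma mul_sq_norm_le_sum_sq_norm_sub_fwdDiff [AddCommMonoid E] [NormedSpace ℝ F] {f : E → F}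
    {M : ℝ} (hf : ∀ z, ‖f z‖ ≤ M) {a : F} {N : ℕ} (hN : 4 * M ≤ N * ‖a‖) (h z : E) :
    N * (‖a‖ ^ 2 / 4) ≤ ∑ k ∈ range N, ‖a - Δ_[h] f (z + k • h)‖ ^ 2 := by
  have hsum : N * ‖a‖ / 2 ≤ ∑ k ∈ range N, ‖a - Δ_[h] f (z + k • h)‖ := by
    have htele : ‖f (z + N • h) - f z‖ ≤ M + M := norm_sub_le_of_le (hf _) (hf _)
    calc N * ‖a‖ / 2 ≤ ‖N • a‖ - ‖f (z + N • h) - f z‖ := by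
          rw [← Nat.cast_smul_eq_nsmul ℝ, norm_smul, RCLike.norm_natCast]; linarith
      _ ≤ ‖N • a - (f (z + N • h) - f z)‖ := norm_sub_norm_le _ _
      _ = ‖∑ k ∈ range N, (a - Δ_[h] f (z + k • h))‖ := by
          rw [sum_sub_distrib, sum_range_fwdDiff_add_nsmul, sum_const, card_range]
      _ ≤ ∑ k ∈ range N, ‖a - Δ_[h] f (z + k • h)‖ := norm_sum_le _ _
  rcases N.eq_zero_or_pos with rfl | hpos
  · simp
  have hpos : (0 : ℝ) < N := Nat.cast_pos.2 hpos
  refine le_of_mul_le_mul_left ?_ hpos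
  calc N * (N * (‖a‖ ^ 2 / 4)) = (N * ‖a‖ / 2) ^ 2 := by ring
    _ ≤ (∑ k ∈ range N, ‖a - Δ_[h] f (z + k • h)‖) ^ 2 := by gcongr
    _ ≤ N * ∑ k ∈ range N, ‖a - Δ_[h] f (z + k • h)‖ ^ 2 := by
      simpa only [card_range] using sq_sum_le_card_mul_sum_sq
        (s := range N) (f := fun k ↦ ‖a - Δ_[h] f (z + k • h)‖)

lemma lipschitzWith_fwdDiff [SeminormedAddCommGroup E] {f : E → F} {K : ℝ≥0}
    (hf : LipschitzWith K f) (h : E) : LipschitzWith (K + K) (Δ_[h] f) := by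
  simpa only [mul_one] using! (hf.comp (isometry_add_right h).lipschitz).sub hf

end Telescoping

section Translation

variable {E : Type*} [MeasurableSpace E] {μ : Measure E} {s t : Set E}

lemma integrableOn_comp_add_right [AddGroup E] [MeasurableAdd E] [μ.IsAddRightInvariant]
    {F : Type*} [NormedAddCommGroup F] {g : E → F} {v : E} (hg : IntegrableOn g t μ)
    (hst : Set.MapsTo (· + v) s t) : IntegrableOn (fun y ↦ g (y + v)) s μ :=
  (((measurePreserving_add_right μ v).integrableOn_comp_preimage
    (measurableEmbedding_addRight v)).2 hg).mono_set hst

lemma setIntegral_comp_add_right_le [AddGroup E] [MeasurableAdd E] [μ.IsAddRightInvariant]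
    {g : E → ℝ} {v : E} (hg : IntegrableOn g t μ) (hg₀ : 0 ≤ g)
    (hst : Set.MapsTo (· + v) s t) : ∫ y in s, g (y + v) ∂μ ≤ ∫ y in t, g y ∂μ := by
  calc ∫ y in s, g (y + v) ∂μ ≤ ∫ y in (· + v) ⁻¹' t, g (y + v) ∂μ :=
        setIntegral_mono_set (integrableOn_comp_add_right hg (Set.mapsTo_preimage _ t))
          (.of_forall fun y ↦ hg₀ (y + v)) (Filter.Eventually.of_forall hst)
    _ = ∫ y in t, g y ∂μ :=
        (measurePreserving_add_right μ v).setIntegral_preimage_emb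
          (measurableEmbedding_addRight v) g t

variable [AddCommGroup E] [MeasurableAdd E] [μ.IsAddRightInvariant]
  {F : Type*} [SeminormedAddCommGroup F] [NormedSpace ℝ F]

lemma measureReal_mul_sq_norm_le_setIntegral_sq_norm_sub_fwdDiff {f : E → F} {M : ℝ}
    (hf : ∀ z, ‖f z‖ ≤ M) {a : F} {N : ℕ} (hN₀ : 0 < N) (hN : 4 * M ≤ N * ‖a‖) {h x : E}
    (hs : μ s ≠ ⊤) (hst : ∀ k < N, Set.MapsTo (· + k • h) s t)
    (hint : IntegrableOn (fun y ↦ ‖a - Δ_[h] f (x + y)‖ ^ 2) t μ) :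
    μ.real s * (‖a‖ ^ 2 / 4) ≤ ∫ y in t, ‖a - Δ_[h] f (x + y)‖ ^ 2 ∂μ := by
  set g : E → ℝ := fun y ↦ ‖a - Δ_[h] f (x + y)‖ ^ 2
  have hg₀ : 0 ≤ g := fun y ↦ sq_nonneg _
  have hshift : ∀ k ∈ range N, IntegrableOn (fun y ↦ g (y + k • h)) s μ := fun k hk ↦
    integrableOn_comp_add_right hint (hst k (mem_range.1 hk))
  refine le_of_mul_le_mul_left ?_ (Nat.cast_pos (α := ℝ).2 hN₀)
  calc N * (μ.real s * (‖a‖ ^ 2 / 4)) = ∫ _ in s, N * (‖a‖ ^ 2 / 4) ∂μ := by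
        rw [setIntegral_const, smul_eq_mul]; ring
    _ ≤ ∫ y in s, ∑ k ∈ range N, g (y + k • h) ∂μ := by
        refine setIntegral_mono (integrableOn_const hs) (integrable_finsetSum _ hshift) fun y ↦ ?_
        simpa only [g, add_assoc] using mul_sq_norm_le_sum_sq_norm_sub_fwdDiff hf hN h (x + y)
    _ = ∑ k ∈ range N, ∫ y in s, g (y + k • h) ∂μ := integral_finsetSum _ hshift
    _ ≤ ∑ _ ∈ range N, ∫ y in t, g y ∂μ :=
        sum_le_sum fun k hk ↦ setIntegral_comp_add_right_le hint hg₀ (hst k (mem_range.1 hk))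
    _ = N * ∫ y in t, g y ∂μ := by rw [sum_const, card_range, nsmul_eq_mul]

end Translation

variable {E F : Type*} [NormedAddCommGroup E] [NormedAddCommGroup F]

/-- The integrand of the nonlocal dissipation of `g` at `x`: on an `n`-dimensional space,
`D_γ(g)(x) = ∫ dissipationDensity (n + γ) g x y dy`. The parameter `s` is the full exponent `n + γ`
of the kernel. -/
noncomputable def dissipationDensity (s : ℝ) (g : E → F) (x y : E) : ℝ :=
  ‖g x - g (x + y)‖ ^ 2 / ‖y‖ ^ s

section DissipationDensity

lemma dissipationDensity_nonneg (s : ℝ) (g : E → F) (x y : E) : 0 ≤ dissipationDensity s g x y := by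
  unfold dissipationDensity
  positivity

lemma norm_rpow_mul_dissipationDensity (s : ℝ) (g : E → F) (x y : E) :
    ‖y‖ ^ s * dissipationDensity s g x y = ‖g x - g (x + y)‖ ^ 2 := by
  rcases eq_or_ne y 0 with rfl | hy
  · simp [dissipationDensity]
  · have : 0 < ‖y‖ := norm_pos_iff.2 hy
    exact mul_div_cancel₀ _ (by positivity)

lemma sq_norm_sub_le_rpow_mul_dissipationDensity {s r : ℝ} (hs : 0 ≤ s) (g : E → F) (x : E) {y : E}
    (hy : ‖y‖ ≤ r) : ‖g x - g (x + y)‖ ^ 2 ≤ r ^ s * dissipationDensity s g x y := by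
  rw [← norm_rpow_mul_dissipationDensity s]
  gcongr
  exact dissipationDensity_nonneg s g x y

variable [MeasurableSpace E] [BorelSpace E] {μ : Measure E}

lemma integrableOn_sq_norm_sub_closedBall {s : ℝ} (hs : 0 ≤ s) {g : E → F} {x : E}
    (hint : Integrable (dissipationDensity s g x) μ) (r : ℝ) :
    IntegrableOn (fun y ↦ ‖g x - g (x + y)‖ ^ 2) (closedBall 0 r) μ := by
  refine (hint.integrableOn.const_mul (r ^ s)).mono' ?_ ?_
  · have hnorm : Measurable fun y : E ↦ ‖y‖ ^ s := by fun_prop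
    simpa only [← norm_rpow_mul_dissipationDensity s] using!
      (hnorm.aestronglyMeasurable.mul hint.aestronglyMeasurable).restrict
  · filter_upwards [ae_restrict_mem measurableSet_closedBall] with y hy
    rw [Real.norm_of_nonneg (sq_nonneg _)]
    exact sq_norm_sub_le_rpow_mul_dissipationDensity hs g x (mem_closedBall_zero_iff.1 hy)

lemma setIntegral_sq_norm_sub_closedBall_le {s r : ℝ} (hs : 0 ≤ s) (hr : 0 ≤ r) {g : E → F} {x : E}
    (hint : Integrable (dissipationDensity s g x) μ) :
    ∫ y in closedBall 0 r, ‖g x - g (x + y)‖ ^ 2 ∂μ ≤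
      r ^ s * ∫ y, dissipationDensity s g x y ∂μ := by
  calc ∫ y in closedBall 0 r, ‖g x - g (x + y)‖ ^ 2 ∂μ
      ≤ ∫ y in closedBall 0 r, r ^ s * dissipationDensity s g x y ∂μ :=
        setIntegral_mono_on (integrableOn_sq_norm_sub_closedBall hs hint r)
          (hint.integrableOn.const_mul _) measurableSet_closedBall fun y hy ↦
            sq_norm_sub_le_rpow_mul_dissipationDensity hs g x (mem_closedBall_zero_iff.1 hy)
    _ = r ^ s * ∫ y in closedBall 0 r, dissipationDensity s g x y ∂μ := integral_const_mul _ _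
    _ ≤ r ^ s * ∫ y, dissipationDensity s g x y ∂μ :=
        mul_le_mul_of_nonneg_left
          (setIntegral_le_integral hint (.of_forall (dissipationDensity_nonneg s g x)))
          (Real.rpow_nonneg hr s)

lemma measurable_dissipationDensity {g : E → F} (hg : Continuous g) (s : ℝ) (x : E) :
    Measurable (dissipationDensity s g x) := by
  have hnum : Continuous fun y ↦ ‖g x - g (x + y)‖ ^ 2 := by fun_prop
  exact hnum.measurable.div (by fun_prop)

variable [NormedSpace ℝ E] [FiniteDimensional ℝ E] [μ.IsAddHaarMeasure] {γ : ℝ}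

lemma integrableOn_dissipationDensity_ball (hE : 1 ≤ finrank ℝ E) (hγ : γ < 2) {g : E → F}
    {K : ℝ≥0} (hg : LipschitzWith K g) (x : E) (r : ℝ) :
    IntegrableOn (dissipationDensity (finrank ℝ E + γ) g x) (ball 0 r) μ := by
  refine integrableOn_ball_of_norm_le_rpow (C := (K : ℝ) ^ 2) (α := finrank ℝ E + γ - 2) hE
    (by linarith) (.of_forall fun y ↦ ?_)
    (measurable_dissipationDensity hg.continuous _ x).aestronglyMeasurable
  rw [Real.norm_of_nonneg (dissipationDensity_nonneg _ g x y)]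
  rcases eq_or_ne y 0 with rfl | hy
  · simp only [dissipationDensity, add_zero, sub_self, norm_zero, ne_eq, OfNat.ofNat_ne_zero,
      not_false_eq_true, zero_pow, zero_div]
    positivity
  · have hy₀ : 0 < ‖y‖ := norm_pos_iff.2 hy
    have hlip : ‖g x - g (x + y)‖ ≤ K * ‖y‖ := by
      simpa [dist_eq_norm] using hg.dist_le_mul x (x + y)
    calc dissipationDensity (finrank ℝ E + γ) g x y
        ≤ (K * ‖y‖) ^ 2 / ‖y‖ ^ (finrank ℝ E + γ) := by unfold dissipationDensity; gcongr
      _ = K ^ 2 * ‖y‖ ^ (-(finrank ℝ E + γ - 2)) := by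
        rw [neg_sub, Real.rpow_sub hy₀, Real.rpow_two]; ring

lemma integrableOn_dissipationDensity_compl_ball (hγ : 0 < γ) {g : E → F} (hg : Continuous g)
    {M : ℝ} (hM : ∀ z, ‖g z‖ ≤ M) (x : E) :
    IntegrableOn (dissipationDensity (finrank ℝ E + γ) g x) (ball 0 1)ᶜ μ := by
  set s : ℝ := finrank ℝ E + γ
  have hs : finrank ℝ E < s := lt_add_of_pos_right _ hγ
  have : 0 ≤ s := (Nat.cast_nonneg _).trans hs.le
  refine ((integrable_one_add_norm hs).const_mul ((M + M) ^ 2 * 2 ^ s)).integrableOn.mono'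
    (measurable_dissipationDensity hg s x).aestronglyMeasurable ?_
  filter_upwards [ae_restrict_mem measurableSet_ball.compl] with y hy
  have hy₁ : 1 ≤ ‖y‖ := by simpa using hy
  rw [Real.norm_of_nonneg (dissipationDensity_nonneg s g x y)]
  calc dissipationDensity s g x y ≤ (M + M) ^ 2 / ((1 + ‖y‖) / 2) ^ s := by
        unfold dissipationDensity
        gcongr
        · exact norm_sub_le_of_le (hM _) (hM _)
        · linarith
    _ = (M + M) ^ 2 * 2 ^ s * (1 + ‖y‖) ^ (-s) := by
        rw [Real.div_rpow (by positivity) zero_le_two, Real.rpow_neg (by positivity)]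
        field_simp

lemma integrable_dissipationDensity (hE : 1 ≤ finrank ℝ E) (hγ : γ ∈ Set.Ioo 0 2) {g : E → F}
    {K : ℝ≥0} (hg : LipschitzWith K g) {M : ℝ} (hM : ∀ z, ‖g z‖ ≤ M) (x : E) :
    Integrable (dissipationDensity (finrank ℝ E + γ) g x) μ := by
  rw [← integrableOn_univ, ← Set.union_compl_self (ball 0 1)]
  exact (integrableOn_dissipationDensity_ball hE hγ.2 hg x 1).union
    (integrableOn_dissipationDensity_compl_ball hγ.1 hg.continuous hM x)

end DissipationDensity

section LowerBound

variable [NormedSpace ℝ E] [FiniteDimensional ℝ E] [MeasurableSpace E] [BorelSpace E]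
  (μ : Measure E) [μ.IsAddHaarMeasure] [NormedSpace ℝ F] {γ : ℝ}

lemma measureReal_closedBall_mul_sq_norm_fwdDiff_le {s : ℝ} (hs : 0 ≤ s) {f : E → F} {M : ℝ}
    (hf : ∀ z, ‖f z‖ ≤ M) {x h : E} {N : ℕ} (hN₀ : 0 < N) (hN : 4 * M ≤ N * ‖Δ_[h] f x‖)
    (hint : Integrable (dissipationDensity s (Δ_[h] f) x) μ) :
    μ.real (closedBall 0 (N * ‖h‖)) * (‖Δ_[h] f x‖ ^ 2 / 4) ≤
      (2 * (N * ‖h‖)) ^ s * ∫ y, dissipationDensity s (Δ_[h] f) x y ∂μ := by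
  have hshift : ∀ k < N, Set.MapsTo (· + k • h) (closedBall 0 (N * ‖h‖))
      (closedBall 0 (2 * (N * ‖h‖))) := fun k hk y hy ↦ by
    rw [mem_closedBall_zero_iff] at hy ⊢
    calc ‖y + k • h‖ ≤ N * ‖h‖ + k * ‖h‖ := norm_add_le_of_le hy (norm_nsmul_le.trans_eq (by simp))
      _ ≤ 2 * (N * ‖h‖) := by rw [two_mul]; gcongr
  exact (measureReal_mul_sq_norm_le_setIntegral_sq_norm_sub_fwdDiff hf hN₀ hN
    measure_closedBall_lt_top.ne hshift (integrableOn_sq_norm_sub_closedBall hs hint _)).trans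
    (setIntegral_sq_norm_sub_closedBall_le hs (by positivity) hint)

lemma measureReal_ball_mul_sq_norm_fwdDiff_le (hγ : 0 ≤ γ) {f : E → F} {M : ℝ}
    (hf : ∀ z, ‖f z‖ ≤ M) {x h : E} (hh : h ≠ 0) {N : ℕ} (hN₀ : 0 < N)
    (hN : 4 * M ≤ N * ‖Δ_[h] f x‖)
    (hint : Integrable (dissipationDensity (finrank ℝ E + γ) (Δ_[h] f) x) μ) :
    μ.real (ball 0 1) * ‖Δ_[h] f x‖ ^ 2 ≤ 4 * 2 ^ (finrank ℝ E + γ) * (N * ‖h‖) ^ γ *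
      ∫ y, dissipationDensity (finrank ℝ E + γ) (Δ_[h] f) x y ∂μ := by
  have hR : 0 < N * ‖h‖ := mul_pos (Nat.cast_pos.2 hN₀) (norm_pos_iff.2 hh)
  have hball := measureReal_closedBall_mul_sq_norm_fwdDiff_le μ (by positivity) hf hN₀ hN hint
  rw [Measure.addHaar_real_closedBall μ 0 hR.le, Real.mul_rpow zero_le_two hR.le,
    Real.rpow_add hR, Real.rpow_natCast] at hball
  refine le_of_mul_le_mul_left ?_ (pow_pos hR (finrank ℝ E))
  linarith

lemma exists_nat_mul_mem_Icc {a M : ℝ} (ha : 0 < a) (haM : a ≤ 2 * M) :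
    ∃ N : ℕ, 0 < N ∧ N * a ∈ Set.Icc (4 * M) (6 * M) := by
  have hM : 0 < M := by linarith
  refine ⟨⌈4 * M / a⌉₊, Nat.ceil_pos.2 (by positivity), ?_, ?_⟩
  · exact (div_le_iff₀ ha).1 (Nat.le_ceil _)
  · calc ⌈4 * M / a⌉₊ * a ≤ (4 * M / a + 1) * a := by
          gcongr; exact (Nat.ceil_lt_add_one (by positivity)).le
      _ ≤ 6 * M := by rw [add_mul, div_mul_cancel₀ _ ha.ne']; linarith

theorem finite_difference_lower_bound_general (hγ : 0 ≤ γ) :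
    ∃ C > (0 : ℝ), ∀ (f : E → F) (M : ℝ), (∀ z, ‖f z‖ ≤ M) → ∀ x h : E,
      Integrable (dissipationDensity (finrank ℝ E + γ) (Δ_[h] f) x) μ →
      ‖Δ_[h] f x‖ ^ (γ + 2) ≤ C * M ^ γ * ‖h‖ ^ γ *
        ∫ y, dissipationDensity (finrank ℝ E + γ) (Δ_[h] f) x y ∂μ := by
  have hV : 0 < μ.real (ball (0 : E) 1) :=
    ENNReal.toReal_pos (measure_ball_pos μ 0 one_pos).ne' measure_ball_lt_top.ne
  refine ⟨4 * 2 ^ (finrank ℝ E + γ) * 6 ^ γ / μ.real (ball (0 : E) 1), by positivity,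
    fun f M hf x h hint ↦ ?_⟩
  have hM : 0 ≤ M := (norm_nonneg _).trans (hf 0)
  set I := ∫ y, dissipationDensity (finrank ℝ E + γ) (Δ_[h] f) x y ∂μ
  have hI : 0 ≤ I := integral_nonneg (dissipationDensity_nonneg _ _ x)
  rcases eq_or_ne (Δ_[h] f x) 0 with h₀ | h₀
  · rw [h₀, norm_zero, Real.zero_rpow (by linarith)]
    positivity
  have ha : 0 < ‖Δ_[h] f x‖ := norm_pos_iff.2 h₀
  have hh : h ≠ 0 := by rintro rfl; simp [fwdDiff] at h₀
  obtain ⟨N, hN₀, hN, hN'⟩ := exists_nat_mul_mem_Icc ha (norm_fwdDiff_le hf h x)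
  have hpow : ‖Δ_[h] f x‖ ^ γ * (N * ‖h‖) ^ γ ≤ 6 ^ γ * M ^ γ * ‖h‖ ^ γ := by
    rw [← Real.mul_rpow ha.le (by positivity), ← Real.mul_rpow (by positivity) hM,
      ← Real.mul_rpow (by positivity) (norm_nonneg h), mul_left_comm, ← mul_assoc]
    gcongr
  have hsq := measureReal_ball_mul_sq_norm_fwdDiff_le μ hγ hf hh hN₀ hN hint
  rw [Real.rpow_add ha, Real.rpow_two, div_mul_eq_mul_div, div_mul_eq_mul_div, div_mul_eq_mul_div,
    le_div_iff₀ hV]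
  calc ‖Δ_[h] f x‖ ^ γ * ‖Δ_[h] f x‖ ^ 2 * μ.real (ball 0 1)
      = ‖Δ_[h] f x‖ ^ γ * (μ.real (ball 0 1) * ‖Δ_[h] f x‖ ^ 2) := by ring
    _ ≤ ‖Δ_[h] f x‖ ^ γ * (4 * 2 ^ (finrank ℝ E + γ) * (N * ‖h‖) ^ γ * I) := by gcongr
    _ = 4 * 2 ^ (finrank ℝ E + γ) * (‖Δ_[h] f x‖ ^ γ * (N * ‖h‖) ^ γ) * I := by ring
    _ ≤ 4 * 2 ^ (finrank ℝ E + γ) * (6 ^ γ * M ^ γ * ‖h‖ ^ γ) * I := by gcongr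
    _ = 4 * 2 ^ (finrank ℝ E + γ) * 6 ^ γ * M ^ γ * ‖h‖ ^ γ * I := by ring

end LowerBound

section Schwartz

variable [NormedSpace ℝ E] [NormedSpace ℝ F]

lemma exists_lipschitzWith_schwartzMap (f : SchwartzMap E F) : ∃ K, LipschitzWith K f := by
  refine ⟨(SchwartzMap.seminorm ℝ 0 1 f).toNNReal,
    lipschitzWith_of_nnnorm_fderiv_le (𝕜 := ℝ) f.differentiable
      fun x ↦ NNReal.le_toNNReal_of_coe_le ?_⟩
  rw [coe_nnnorm, ← norm_iteratedFDeriv_one]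
  exact f.norm_iteratedFDeriv_le_seminorm ℝ 1 x

lemma norm_schwartzMap_le_iSup (f : SchwartzMap E F) (x : E) : ‖f x‖ ≤ ⨆ z, ‖f z‖ :=
  le_ciSup (f := fun z ↦ ‖f z‖)
    ⟨SchwartzMap.seminorm ℝ 0 0 f, Set.forall_mem_range.2 (f.norm_le_seminorm ℝ)⟩ x

variable [FiniteDimensional ℝ E] [MeasurableSpace E] [BorelSpace E] {μ : Measure E}
  [μ.IsAddHaarMeasure]

lemma integrable_dissipationDensity_fwdDiff_schwartzMap (hE : 1 ≤ finrank ℝ E) {γ : ℝ}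
    (hγ : γ ∈ Set.Ioo 0 2) (f : SchwartzMap E F) (h x : E) :
    Integrable (dissipationDensity (finrank ℝ E + γ) (Δ_[h] f) x) μ := by
  obtain ⟨K, hK⟩ := exists_lipschitzWith_schwartzMap f
  exact integrable_dissipationDensity hE hγ (lipschitzWith_fwdDiff hK h)
    (norm_fwdDiff_le (norm_schwartzMap_le_iSup f) h) x

end Schwartz

/-- Nonlinear lower bound for finite differences:
`D_γ(δ_h f)(x) ≥ |δ_h f(x)|^{γ+2} / (C |h|^γ ‖f‖_∞^γ)`. -/
theorem finite_difference_lower_bound (n : ℕ) (hn : 2 ≤ n) (γ : ℝ)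
    (hγ : γ ∈ Set.Ioo (0 : ℝ) 2) :
    ∃ C > (0 : ℝ), ∀ (f : SchwartzMap (EuclideanSpace ℝ (Fin n)) ℝ)
      (x h : EuclideanSpace ℝ (Fin n)),
      C * (⨆ z : EuclideanSpace ℝ (Fin n), |f z|) ^ γ * ‖h‖ ^ γ *
          ∫ y : EuclideanSpace ℝ (Fin n),
            |(f (x + h) - f x) - (f (x + y + h) - f (x + y))| ^ 2 / ‖y‖ ^ ((n : ℝ) + γ) ≥
        |f (x + h) - f x| ^ (γ + 2) := by
  obtain ⟨C, hC, hbound⟩ := finite_difference_lower_bound_general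
    (E := EuclideanSpace ℝ (Fin n)) (F := ℝ) volume hγ.1.le
  have hdim : 1 ≤ finrank ℝ (EuclideanSpace ℝ (Fin n)) := by
    rw [finrank_euclideanSpace_fin]; omega
  refine ⟨C, hC, fun f x h ↦ ?_⟩
  simpa only [finrank_euclideanSpace_fin] using! hbound f _ (norm_schwartzMap_le_iSup f) x h
    (integrable_dissipationDensity_fwdDiff_schwartzMap hdim hγ f h x)
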